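/- Let 𝓗 = (V,E) be a connected hypergraph with associated bipartite graph Bip 𝓗, and set g = Σ_{e∈E} deg_{Bip 𝓗}(e) − |E| − |V| + 1. Then for every k ≤ |E|, the following are equivalent: (1) [x^i]I_𝓗(x) = C(g+i−1, i) for all i ≤ k; (2) the length of a shortest cycle of Bip 𝓗 is at least 2k+2. Here C(·,·) denotes the binomial coefficient. -/

import Mathlib

open Finset Polynomial

/-- `f` is the rank function of a polymatroid over the ground set `[n]` (encoded as `Fin n`):
normalization, monotonicity and submodularity. -/
def IsPolymatroidRank (n : ℕ) (f : Finset (Fin n) → ℕ) : Prop :=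
  f ∅ = 0 ∧ (∀ I J : Finset (Fin n), I ⊆ J → f I ≤ f J) ∧
    ∀ I J : Finset (Fin n), f (I ∪ J) + f (I ∩ J) ≤ f I + f J

/-- The set of bases of the polymatroid `P ⊆ ℤ^n_{≥0}` with rank function `f`:
all nonnegative integer vectors `a` with `∑_{i ∈ I} a i ≤ f I` for every `I ⊆ [n]`
and `∑_{i ∈ [n]} a i = f [n]`.  (Every such vector has entries `≤ f [n]`, whence the
bounding box used to produce a `Finset`.) -/
def polyBases (n : ℕ) (f : Finset (Fin n) → ℕ) : Finset (Fin n → ℤ) :=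
  ((Finset.univ : Finset (Fin n → Fin (f Finset.univ + 1))).image
      (fun a i => ((a i : ℕ) : ℤ))).filter
    fun a => (∀ i, 0 ≤ a i) ∧ (∀ I : Finset (Fin n), ∑ i ∈ I, a i ≤ (f I : ℤ)) ∧
      ∑ i, a i = (f Finset.univ : ℤ)

/-- The externally active indices of a basis `a`: those `i` such that
`a + e_i - e_j ∉ P` for every `j < i`. -/
def extAct (n : ℕ) (f : Finset (Fin n) → ℕ) (a : Fin n → ℤ) : Finset (Fin n) :=
  Finset.univ.filter fun i => ∀ j, j < i →
    (fun t => a t + (if t = i then 1 else 0) - (if t = j then 1 else 0)) ∉ polyBases n f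

/-- The internally active indices of a basis `a`: those `i` such that
`a - e_i + e_j ∉ P` for every `j < i`. -/
def intAct (n : ℕ) (f : Finset (Fin n) → ℕ) (a : Fin n → ℤ) : Finset (Fin n) :=
  Finset.univ.filter fun i => ∀ j, j < i →
    (fun t => a t - (if t = i then 1 else 0) + (if t = j then 1 else 0)) ∉ polyBases n f

/-- The exterior polynomial `X_P(y) = ∑_{a ∈ P} y^(n - |Ext(a)|)`. -/
noncomputable def exteriorPoly (n : ℕ) (f : Finset (Fin n) → ℕ) : Polynomial ℤ :=
  ∑ a ∈ polyBases n f, X ^ (n - (extAct n f a).card)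

/-- The interior polynomial `I_P(x) = ∑_{a ∈ P} x^(n - |Int(a)|)`. -/
noncomputable def interiorPoly (n : ℕ) (f : Finset (Fin n) → ℕ) : Polynomial ℤ :=
  ∑ a ∈ polyBases n f, X ^ (n - (intAct n f a).card)

/-- `r_k(P) = min { n - |F| : F ⊆ [n], f F ≤ f [n] - k }` (junk value `0` if no such `F`). -/
noncomputable def rk (n : ℕ) (f : Finset (Fin n) → ℕ) (k : ℕ) : ℕ :=
  sInf {m | ∃ F : Finset (Fin n), (f F : ℤ) ≤ (f Finset.univ : ℤ) - k ∧ m = n - F.card}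

/-- `r'_k(P) = min { |F| : F ⊆ [n], ∑_{i ∈ F} f {i} - f F ≥ k }` (junk value `0` if no such `F`). -/
noncomputable def rk' (n : ℕ) (f : Finset (Fin n) → ℕ) (k : ℕ) : ℕ :=
  sInf {m | ∃ F : Finset (Fin n), (k : ℤ) ≤ (∑ i ∈ F, (f {i} : ℤ)) - (f F : ℤ) ∧ m = F.card}

/-- `H_j(P)`: the flats `H` (i.e. `f (H ∪ {e}) > f H` for all `e ∉ H`) with
`f H = f [n] - 1` and `n - |H| = j`. -/
def Hset (n : ℕ) (f : Finset (Fin n) → ℕ) (j : ℕ) : Finset (Finset (Fin n)) :=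
  Finset.univ.filter fun H =>
    (∀ e, e ∉ H → f H < f (insert e H)) ∧ (f H : ℤ) = (f Finset.univ : ℤ) - 1 ∧
      n - H.card = j

/-- `C_j(P)`: the sets `C` with `|C| = j`, `∑_{i ∈ C} f {i} - f C = 1` and
`∑_{i ∈ C \ {j'}} f {i} = f (C \ {j'})` for every `j' ∈ C`. -/
def Cset (n : ℕ) (f : Finset (Fin n) → ℕ) (j : ℕ) : Finset (Finset (Fin n)) :=
  Finset.univ.filter fun C => C.card = j ∧
    (∑ i ∈ C, (f {i} : ℤ)) - (f C : ℤ) = 1 ∧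
    ∀ j' ∈ C, (∑ i ∈ C.erase j', (f {i} : ℤ)) = (f (C.erase j') : ℤ)

/-- The dual rank function `f*(I) = f([n] \ I) - f([n]) + ∑_{i ∈ I} f {i}`
(the subtraction is exact for a polymatroid rank function). -/
def fdual (n : ℕ) (f : Finset (Fin n) → ℕ) : Finset (Fin n) → ℕ :=
  fun I => f (Finset.univ \ I) + (∑ i ∈ I, f {i}) - f Finset.univ

/-- The bipartite graph `Bip 𝓗` associated with the hypergraph `𝓗 = (V, E)` (hyperedges are
given as a family `E : Fin m → Finset V`, so that repeated hyperedges are allowed):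
`v ∈ V` is adjacent to `e ∈ E` iff `v ∈ e`. -/
def bipGraph {V : Type*} (m : ℕ) (E : Fin m → Finset V) : SimpleGraph (V ⊕ Fin m) :=
  SimpleGraph.fromRel fun x y =>
    ∃ (v : V) (e : Fin m), v ∈ E e ∧ x = Sum.inl v ∧ y = Sum.inr e

/-- The vertex set of `Bip 𝓗|_{E'}`: the hyperedges in `E'` together with all vertices of `V`
incident with an element of `E'`. -/
def bipVerts {V : Type*} (m : ℕ) (E : Fin m → Finset V) (E' : Finset (Fin m)) :
    Set (V ⊕ Fin m) :=
  {x | ∃ e ∈ E', x = Sum.inr e ∨ ∃ v ∈ E e, x = Sum.inl v}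

/-- The graph `Bip 𝓗|_{E'}`: the subgraph of `Bip 𝓗` induced by `bipVerts`. -/
def restGraph {V : Type*} (m : ℕ) (E : Fin m → Finset V) (E' : Finset (Fin m)) :
    SimpleGraph (bipVerts m E E') :=
  SimpleGraph.induce (bipVerts m E E') (bipGraph m E)

/-- `c(E')`: the number of connected components of `Bip 𝓗|_{E'}`. -/
noncomputable def compCount {V : Type*} (m : ℕ) (E : Fin m → Finset V)
    (E' : Finset (Fin m)) : ℕ :=
  Nat.card (restGraph m E E').ConnectedComponent

/-- The rank function `μ` of the hypergraphical polymatroid: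
`μ(∅) = 0` and `μ(E') = |⋃ E'| - c(E')`. -/
noncomputable def muRank {V : Type*} [DecidableEq V] (m : ℕ) (E : Fin m → Finset V) :
    Finset (Fin m) → ℕ :=
  fun E' => (E'.biUnion E).card - compCount m E E'

/-!
Call `ν F = ∑_{e ∈ F} f {e} - f F` the nullity of `F` for a polymatroid rank function `f` on a set
of `n` elements. Each independent integer vector, negative entries allowed, can be raised to
exactly one basis by increasing only internally active coordinates of that basis. Writing
independent vectors as `f {i} - d i`, this counts the `d ≥ 0` with `∑ d ≤ ν [n] + s` and `ν F ≤
∑_F d` for all `F`: they number `∑_j I_j * C(s + n - j, n - j)`, where `I_j` is the coefficient of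
`x^j` in the interior polynomial. Without the constraints `ν F ≤ ∑_F d` the count is the same sum
with `I_j` replaced by `C(ν [n] + j - 1, j)`. So the coefficients up to degree `k` are these
binomial coefficients iff the `d` violating some constraint number only `o(s^(n - k))`. A
constraint with `ν F > 0` is violated by a number of points of order `s^(n - |F|)`, hence this
happens iff `ν` vanishes on all sets of at most `k` elements.

For a hypergraph, `ν F` is the cyclomatic number of `Bip 𝓗|_F`, and a cycle of length `2 * l` in
`Bip 𝓗` passes through exactly `l` hyperedges; so this vanishing says that there is no cycle of
length at most `2 * k`.
-/

section ComponentCount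

variable {W : Type*} {G H K : SimpleGraph W}

lemma card_connectedComponent_eq_one (hG : G.Connected) : Nat.card G.ConnectedComponent = 1 := by
  have := hG.preconnected.subsingleton_connectedComponent
  have := hG.nonempty
  exact Nat.card_unique

/-- The real functions on the vertices of `G` that are constant along edges, a space whose dimension
is the number of connected components of `G`. -/
def locallyConstantFunctions (G : SimpleGraph W) : Submodule ℝ (W → ℝ) where
  carrier := {x | ∀ ⦃u v⦄, G.Adj u v → x u = x v}
  add_mem' hx hy _ _ h := congrArg₂ (· + ·) (hx h) (hy h)
  zero_mem' _ _ _ := rfl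
  smul_mem' c _ hx _ _ h := congrArg (c * ·) (hx h)

lemma mem_locallyConstantFunctions {x : W → ℝ} :
    x ∈ locallyConstantFunctions G ↔ ∀ ⦃u v⦄, G.Adj u v → x u = x v :=
  .rfl

lemma locallyConstantFunctions_anti (h : G ≤ H) :
    locallyConstantFunctions H ≤ locallyConstantFunctions G :=
  fun _ hx _ _ huv => hx (h huv)

lemma locallyConstantFunctions_sup :
    locallyConstantFunctions (G ⊔ H) =
      locallyConstantFunctions G ⊓ locallyConstantFunctions H := by
  ext x
  simp only [mem_locallyConstantFunctions, Submodule.mem_inf, SimpleGraph.sup_adj, or_imp,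
    forall_and]

lemma card_connectedComponent_lt_of_reachable [Finite W] (hle : G ≤ H) {u v : W}
    (hH : H.Reachable u v) (hG : ¬ G.Reachable u v) :
    Nat.card H.ConnectedComponent < Nat.card G.ConnectedComponent := by
  have hsurj := SimpleGraph.ConnectedComponent.surjective_map_ofLE hle
  refine (Nat.card_le_card_of_surjective _ hsurj).lt_of_ne fun heq => hG ?_
  have hinj := ((Nat.bijective_iff_surjective_and_card _).2 ⟨hsurj, heq.symm⟩).injective
  exact SimpleGraph.ConnectedComponent.exact
    (hinj (a₁ := G.connectedComponentMk u) (a₂ := G.connectedComponentMk v)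
      (SimpleGraph.ConnectedComponent.sound hH))

lemma reachable_induce_of_support_subset {S : Set W} (hS : G.support ⊆ S) {u v : W}
    (h : G.Reachable u v) (hu : u ∈ S) :
    ∃ hv : v ∈ S, (G.induce S).Reachable ⟨u, hu⟩ ⟨v, hv⟩ := by
  obtain ⟨w⟩ := h
  induction w with
  | nil => exact ⟨hu, .rfl⟩
  | cons h _ ih =>
    obtain ⟨hv, hreach⟩ := ih (hS ⟨_, h.symm⟩)
    have hadj : (G.induce S).Adj ⟨_, hu⟩ ⟨_, hS ⟨_, h.symm⟩⟩ := h
    exact ⟨hv, hadj.reachable.trans hreach⟩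

variable [Finite W]

lemma finrank_locallyConstantFunctions :
    Module.finrank ℝ (locallyConstantFunctions G) = Nat.card G.ConnectedComponent := by
  classical
  have := Fintype.ofFinite W
  have hker : locallyConstantFunctions G = (Matrix.toLin' (G.lapMatrix ℝ)).ker :=
    Submodule.ext fun _ => G.lapMatrix_mulVec_eq_zero_iff_forall_adj.symm
  rw [hker, Nat.card_eq_fintype_card,
    SimpleGraph.card_connectedComponent_eq_finrank_ker_toLin'_lapMatrix]

lemma card_connectedComponent_supermodular (hG : K ≤ G) (hH : K ≤ H) :
    Nat.card G.ConnectedComponent + Nat.card H.ConnectedComponent ≤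
      Nat.card (G ⊔ H).ConnectedComponent + Nat.card K.ConnectedComponent := by
  simp only [← finrank_locallyConstantFunctions]
  rw [← Submodule.finrank_sup_add_finrank_inf_eq, ← locallyConstantFunctions_sup, add_comm]
  gcongr
  exact Submodule.finrank_mono
    (sup_le (locallyConstantFunctions_anti hG) (locallyConstantFunctions_anti hH))

lemma finrank_le_finrank_inf_ker_add_one {F M : Type*} [Field F] [AddCommGroup M] [Module F M]
    [FiniteDimensional F M] (P : Submodule F M) (φ : M →ₗ[F] F) :
    Module.finrank F P ≤ Module.finrank F ↥(P ⊓ φ.ker) + 1 := by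
  have hsup := Submodule.finrank_sup_add_finrank_inf_eq P φ.ker
  have htop := Submodule.finrank_le (P ⊔ φ.ker)
  have hker := φ.finrank_range_add_finrank_ker
  have hrange : Module.finrank F φ.range ≤ 1 := by
    simpa only [Module.finrank_self] using Submodule.finrank_le φ.range
  lia

lemma card_connectedComponent_deleteEdges_le (u v : W) :
    Nat.card (G.deleteEdges {s(u, v)}).ConnectedComponent ≤
      Nat.card G.ConnectedComponent + 1 := by
  let φ : (W → ℝ) →ₗ[ℝ] ℝ := (LinearMap.proj u : (W → ℝ) →ₗ[ℝ] ℝ) - LinearMap.proj v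
  have hle : locallyConstantFunctions (G.deleteEdges {s(u, v)}) ⊓ φ.ker ≤
      locallyConstantFunctions G := by
    rintro x ⟨hx, hφ⟩ a b hab
    have huv : x u = x v := sub_eq_zero.1 hφ
    by_cases he : s(a, b) = s(u, v)
    · rcases Sym2.eq_iff.1 he with ⟨rfl, rfl⟩ | ⟨rfl, rfl⟩
      exacts [huv, huv.symm]
    · exact hx (SimpleGraph.deleteEdges_adj.2 ⟨hab, he⟩)
  simp only [← finrank_locallyConstantFunctions]
  exact (finrank_le_finrank_inf_ker_add_one _ φ).trans
    (Nat.add_le_add_right (Submodule.finrank_mono hle) 1)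

lemma ncard_edgeSet_deleteEdges_add_one {e : Sym2 W} (he : e ∈ G.edgeSet) :
    (G.deleteEdges {e}).edgeSet.ncard + 1 = G.edgeSet.ncard := by
  rw [SimpleGraph.edgeSet_deleteEdges, Set.ncard_sdiff_singleton_add_one he]

lemma card_le_ncard_edgeSet_add_card_connectedComponent :
    Nat.card W ≤ G.edgeSet.ncard + Nat.card G.ConnectedComponent := by
  induction hn : G.edgeSet.ncard generalizing G with
  | zero =>
    obtain rfl : G = ⊥ := SimpleGraph.edgeSet_eq_empty.1 ((Set.ncard_eq_zero).1 hn)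
    rw [zero_add]
    exact Nat.card_le_card_of_injective (⊥ : SimpleGraph W).connectedComponentMk fun _ _ h =>
      SimpleGraph.reachable_bot.1 (SimpleGraph.ConnectedComponent.exact h)
  | succ n ih =>
    obtain ⟨⟨u, v⟩, he⟩ := Set.nonempty_of_ncard_ne_zero (hn.trans_ne n.succ_ne_zero)
    have hedges := ncard_edgeSet_deleteEdges_add_one he
    have hcard := ih (G := G.deleteEdges {s(u, v)}) (by lia)
    have hcomp := card_connectedComponent_deleteEdges_le (G := G) u v
    lia

lemma ncard_edgeSet_add_card_connectedComponent_of_isAcyclic (hG : G.IsAcyclic) :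
    G.edgeSet.ncard + Nat.card G.ConnectedComponent = Nat.card W := by
  refine le_antisymm ?_ card_le_ncard_edgeSet_add_card_connectedComponent
  induction hn : G.edgeSet.ncard generalizing G with
  | zero =>
    rw [zero_add]
    exact Nat.card_le_card_of_surjective _ Quot.mk_surjective
  | succ n ih =>
    obtain ⟨⟨u, v⟩, he⟩ := Set.nonempty_of_ncard_ne_zero (hn.trans_ne n.succ_ne_zero)
    have hle := G.deleteEdges_le {s(u, v)}
    have hedges := ncard_edgeSet_deleteEdges_add_one he
    have hcard := ih (hG.anti hle) (by lia)
    have hcomp := card_connectedComponent_lt_of_reachable hle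
      (SimpleGraph.Adj.reachable he) (SimpleGraph.isAcyclic_iff_forall_isBridge.1 hG he)
    lia

lemma isAcyclic_iff_ncard_edgeSet_add_card_connectedComponent :
    G.IsAcyclic ↔ G.edgeSet.ncard + Nat.card G.ConnectedComponent = Nat.card W := by
  refine ⟨ncard_edgeSet_add_card_connectedComponent_of_isAcyclic, fun hcard => ?_⟩
  obtain ⟨T, hTG, hT, hreach⟩ := G.exists_isAcyclic_reachable_eq_le
  have hcomp : Nat.card T.ConnectedComponent = Nat.card G.ConnectedComponent :=
    Nat.card_congr (Quot.congrRight fun u v => by rw [hreach])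
  have hforest := ncard_edgeSet_add_card_connectedComponent_of_isAcyclic hT
  have hedges : T.edgeSet = G.edgeSet :=
    Set.eq_of_subset_of_ncard_le (SimpleGraph.edgeSet_mono hTG) (by lia)
  rwa [← SimpleGraph.edgeSet_injective hedges]

lemma card_connectedComponent_add_ncard {S : Set W} (hS : G.support ⊆ S) :
    Nat.card G.ConnectedComponent + S.ncard =
      Nat.card (G.induce S).ConnectedComponent + Nat.card W := by
  have hcard : Nat.card ((G.induce S).ConnectedComponent ⊕ ↥Sᶜ) =
      Nat.card G.ConnectedComponent := by
    refine Nat.card_eq_of_bijective (Sum.elim (SimpleGraph.ConnectedComponent.map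
      (SimpleGraph.Embedding.induce S).toHom) fun v => G.connectedComponentMk v) ⟨?_, ?_⟩
    · refine Function.Injective.sumElim ?_ ?_ ?_
      · rintro ⟨u⟩ ⟨v⟩ h
        have hreach := SimpleGraph.ConnectedComponent.exact h
        exact SimpleGraph.ConnectedComponent.sound
          (reachable_induce_of_support_subset hS hreach u.2).2
      · rintro ⟨u, hu⟩ ⟨v, hv⟩ h
        obtain ⟨w⟩ := SimpleGraph.ConnectedComponent.exact h
        cases w with
        | nil => rfl
        | cons h _ => exact (hu (hS ⟨_, h⟩)).elim
      · rintro ⟨u⟩ v h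
        have hreach := SimpleGraph.ConnectedComponent.exact h
        exact v.2 (reachable_induce_of_support_subset hS hreach u.2).1
    · rintro ⟨v⟩
      by_cases hv : v ∈ S
      · exact ⟨.inl ((G.induce S).connectedComponentMk ⟨v, hv⟩), rfl⟩
      · exact ⟨.inr ⟨v, hv⟩, rfl⟩
  rw [← hcard, Nat.card_sum, ← Set.ncard_add_ncard_compl S, Nat.card_coe_set_eq Sᶜ]
  lia

end ComponentCount

section HypergraphRank

variable {V : Type*} {m : ℕ} {E : Fin m → Finset V}

lemma bipGraph_adj_inl_inr {v : V} {e : Fin m} :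
    (bipGraph m E).Adj (.inl v) (.inr e) ↔ v ∈ E e := by
  simp [bipGraph]

lemma bipGraph_adj_inr_inl {v : V} {e : Fin m} :
    (bipGraph m E).Adj (.inr e) (.inl v) ↔ v ∈ E e := by
  rw [SimpleGraph.adj_comm, bipGraph_adj_inl_inr]

lemma not_bipGraph_adj_inl_inl {v v' : V} : ¬ (bipGraph m E).Adj (.inl v) (.inl v') := by
  simp [bipGraph]

lemma not_bipGraph_adj_inr_inr {e e' : Fin m} : ¬ (bipGraph m E).Adj (.inr e) (.inr e') := by
  simp [bipGraph]

lemma ncard_edgeSet_bipGraph :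
    (bipGraph m E).edgeSet.ncard = ∑ e, (E e).card := by
  have hcard : Nat.card ((e : Fin m) × E e) = ∑ e, (E e).card := by
    simp
  rw [← Nat.card_coe_set_eq, ← hcard]
  refine (Nat.card_eq_of_bijective
    (fun p => ⟨s(.inr p.1, .inl p.2), bipGraph_adj_inr_inl.2 p.2.2⟩) ⟨?_, ?_⟩).symm
  · rintro ⟨e, v, hv⟩ ⟨e', v', hv'⟩ h
    obtain ⟨rfl, rfl⟩ : e = e' ∧ v = v' := by simpa using congrArg Subtype.val h
    rfl
  · rintro ⟨⟨x, y⟩, h⟩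
    rcases x with v | e <;> rcases y with v' | e'
    · exact (not_bipGraph_adj_inl_inl h).elim
    · exact ⟨⟨e', v, bipGraph_adj_inl_inr.1 h⟩, Subtype.ext Sym2.eq_swap⟩
    · exact ⟨⟨e, v', bipGraph_adj_inr_inl.1 h⟩, rfl⟩
    · exact (not_bipGraph_adj_inr_inr h).elim

/-- The spanning subgraph of `Bip 𝓗` formed by the edges incident with the hyperedges in `F`. Unlike
`restGraph`, it keeps all vertices, so that these graphs can be compared for different `F`. -/
def spanningRest (E : Fin m → Finset V) (F : Finset (Fin m)) : SimpleGraph (V ⊕ Fin m) :=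
  bipGraph m fun e => if e ∈ F then E e else ∅

lemma spanningRest_adj_inr {F : Finset (Fin m)} {e : Fin m} {x : V ⊕ Fin m} :
    (spanningRest E F).Adj (.inr e) x ↔ e ∈ F ∧ (bipGraph m E).Adj (.inr e) x := by
  rcases x with v | e'
  · by_cases he : e ∈ F <;> simp [spanningRest, bipGraph_adj_inr_inl, he]
  · simp [spanningRest, not_bipGraph_adj_inr_inr]

lemma spanningRest_adj {F : Finset (Fin m)} {x y : V ⊕ Fin m} :
    (spanningRest E F).Adj x y ↔
      (bipGraph m E).Adj x y ∧ ∃ e ∈ F, x = .inr e ∨ y = .inr e := by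
  rcases x with v | e
  · rcases y with v' | e'
    · simp [spanningRest, not_bipGraph_adj_inl_inl]
    · rw [SimpleGraph.adj_comm, spanningRest_adj_inr, SimpleGraph.adj_comm]
      simp [and_comm]
  · rw [spanningRest_adj_inr]
    rcases y with v' | e'
    · simp [and_comm]
    · simp [not_bipGraph_adj_inr_inr]

lemma spanningRest_univ : spanningRest E univ = bipGraph m E := by
  simp [spanningRest]

lemma spanningRest_le_bipGraph (F : Finset (Fin m)) : spanningRest E F ≤ bipGraph m E :=
  fun _ _ h => (spanningRest_adj.1 h).1

lemma spanningRest_mono : Monotone (spanningRest E) := fun _ _ h _ _ hxy =>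
  have ⟨hadj, e, he, hxy⟩ := spanningRest_adj.1 hxy
  spanningRest_adj.2 ⟨hadj, e, h he, hxy⟩

lemma spanningRest_union (F F' : Finset (Fin m)) :
    spanningRest E (F ∪ F') = spanningRest E F ⊔ spanningRest E F' := by
  ext x y
  simp only [SimpleGraph.sup_adj, spanningRest_adj, mem_union, or_and_right,
    exists_or, ← and_or_left]

lemma ncard_edgeSet_spanningRest (F : Finset (Fin m)) :
    (spanningRest E F).edgeSet.ncard = ∑ e ∈ F, (E e).card := by
  rw [spanningRest, ncard_edgeSet_bipGraph]
  simp only [apply_ite card, card_empty, sum_ite_mem, univ_inter]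

lemma inl_mem_bipVerts {F : Finset (Fin m)} {v : V} :
    .inl v ∈ bipVerts m E F ↔ ∃ e ∈ F, v ∈ E e := by
  simp [bipVerts]

lemma inr_mem_bipVerts {F : Finset (Fin m)} {e : Fin m} : .inr e ∈ bipVerts m E F ↔ e ∈ F := by
  simp [bipVerts]

lemma support_spanningRest_subset (F : Finset (Fin m)) :
    (spanningRest E F).support ⊆ bipVerts m E F := by
  rintro x ⟨y, h⟩
  obtain ⟨hadj, e, he, rfl | rfl⟩ := spanningRest_adj.1 h
  · exact inr_mem_bipVerts.2 he
  · rcases x with v | e'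
    · exact inl_mem_bipVerts.2 ⟨e, he, bipGraph_adj_inl_inr.1 hadj⟩
    · exact (not_bipGraph_adj_inr_inr hadj).elim

lemma induce_spanningRest (F : Finset (Fin m)) :
    (spanningRest E F).induce (bipVerts m E F) = restGraph m E F := by
  ext ⟨x, hx⟩ ⟨y, hy⟩
  refine ⟨fun h => (spanningRest_adj.1 h).1, fun h => spanningRest_adj.2 ⟨h, ?_⟩⟩
  rcases x with v | e
  · rcases y with v' | e
    · exact (not_bipGraph_adj_inl_inl h).elim
    · exact ⟨e, inr_mem_bipVerts.1 hy, .inr rfl⟩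
  · exact ⟨e, inr_mem_bipVerts.1 hx, .inl rfl⟩

variable [DecidableEq V]

lemma ncard_bipVerts (F : Finset (Fin m)) :
    (bipVerts m E F).ncard = (F.biUnion E).card + F.card := by
  have hverts : bipVerts m E F = ↑((F.biUnion E).disjSum F) := by
    ext (v | e) <;> simp [inl_mem_bipVerts, inr_mem_bipVerts]
  rw [hverts, Set.ncard_coe_finset, card_disjSum]

lemma compCount_le_card_biUnion (hne : ∀ e, (E e).Nonempty) (F : Finset (Fin m)) :
    compCount m E F ≤ (F.biUnion E).card := by
  have hmem (v : F.biUnion E) : Sum.inl v.1 ∈ bipVerts m E F :=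
    inl_mem_bipVerts.2 (mem_biUnion.1 v.2)
  rw [← Nat.card_eq_finsetCard]
  refine Nat.card_le_card_of_surjective
    (fun v => (restGraph m E F).connectedComponentMk ⟨.inl v.1, hmem v⟩) ?_
  rintro ⟨⟨v | e, hx⟩⟩
  · exact ⟨⟨v, mem_biUnion.2 (inl_mem_bipVerts.1 hx)⟩, rfl⟩
  · obtain ⟨v, hv⟩ := hne e
    have hadj : (bipGraph m E).Adj (.inl v) (.inr e) := bipGraph_adj_inl_inr.2 hv
    refine ⟨⟨v, mem_biUnion.2 ⟨e, inr_mem_bipVerts.1 hx, hv⟩⟩, ?_⟩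
    exact SimpleGraph.ConnectedComponent.sound (SimpleGraph.Adj.reachable hadj)

variable [Finite V]

lemma muRank_add_card_connectedComponent (hne : ∀ e, (E e).Nonempty) (F : Finset (Fin m)) :
    muRank m E F + Nat.card (spanningRest E F).ConnectedComponent + F.card =
      Nat.card V + m := by
  have hcomp := card_connectedComponent_add_ncard (support_spanningRest_subset (E := E) F)
  rw [induce_spanningRest, ncard_bipVerts, Nat.card_sum, Nat.card_fin] at hcomp
  have hle := compCount_le_card_biUnion hne F
  simp only [muRank, compCount] at hle ⊢
  lia

lemma muRank_union_add_muRank_inter_le (hne : ∀ e, (E e).Nonempty) (I J : Finset (Fin m)) :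
    muRank m E (I ∪ J) + muRank m E (I ∩ J) ≤ muRank m E I + muRank m E J := by
  have hcomp := card_connectedComponent_supermodular
    (spanningRest_mono (E := E) (inter_subset_left (s₁ := I) (s₂ := J)))
    (spanningRest_mono inter_subset_right)
  rw [← spanningRest_union] at hcomp
  have hI := muRank_add_card_connectedComponent hne I
  have hJ := muRank_add_card_connectedComponent hne J
  have hunion := muRank_add_card_connectedComponent hne (I ∪ J)
  have hinter := muRank_add_card_connectedComponent hne (I ∩ J)
  have hcard := card_union_add_card_inter I J
  lia

lemma muRank_le_muRank_insert (hne : ∀ e, (E e).Nonempty) {F : Finset (Fin m)} {e : Fin m}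
    (he : e ∉ F) : muRank m E F ≤ muRank m E (insert e F) := by
  obtain ⟨v, hv⟩ := hne e
  have hadj : (spanningRest E (insert e F)).Adj (.inr e) (.inl v) :=
    spanningRest_adj_inr.2 ⟨mem_insert_self e F, bipGraph_adj_inr_inl.2 hv⟩
  have hiso : ¬ (spanningRest E F).Reachable (.inr e) (.inl v) := by
    rintro ⟨w⟩
    cases w with
    | cons h _ => exact he (spanningRest_adj_inr.1 h).1
  have hcomp := card_connectedComponent_lt_of_reachable
    (spanningRest_mono (subset_insert e F)) hadj.reachable hiso
  have hF := muRank_add_card_connectedComponent hne F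
  have hinsert := muRank_add_card_connectedComponent hne (insert e F)
  rw [card_insert_of_notMem he] at hinsert
  lia

lemma isPolymatroidRank_muRank (hne : ∀ e, (E e).Nonempty) :
    IsPolymatroidRank m (muRank m E) := by
  refine ⟨by simp [muRank], ?_, muRank_union_add_muRank_inter_le hne⟩
  exact (monotone_iff_forall_le_insert.2 fun _ _ he => muRank_le_muRank_insert hne he :
    Monotone (muRank m E))

lemma isAcyclic_spanningRest_iff (hne : ∀ e, (E e).Nonempty) {F : Finset (Fin m)} :
    (spanningRest E F).IsAcyclic ↔ ∑ e ∈ F, (E e).card = muRank m E F + F.card := by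
  rw [isAcyclic_iff_ncard_edgeSet_add_card_connectedComponent, ncard_edgeSet_spanningRest,
    Nat.card_sum, Nat.card_fin]
  have hrank := muRank_add_card_connectedComponent hne F
  lia

end HypergraphRank

section Cycles

variable {V : Type*} {m : ℕ} {E : Fin m → Finset V} {x y : V ⊕ Fin m}

lemma toNat_isRight_add_toNat_isRight_of_adj (h : (bipGraph m E).Adj x y) :
    x.isRight.toNat + y.isRight.toNat = 1 := by
  rcases x with v | e <;> rcases y with v' | e'
  · exact (not_bipGraph_adj_inl_inl h).elim
  · rfl
  · rfl
  · exact (not_bipGraph_adj_inr_inr h).elim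

lemma two_mul_countP_isRight_add (w : (bipGraph m E).Walk x y) :
    2 * w.support.tail.countP Sum.isRight + x.isRight.toNat = w.length + y.isRight.toNat := by
  induction w with
  | nil => simp
  | @cons x z y h p ih =>
    have hxz := toNat_isRight_add_toNat_isRight_of_adj h
    have hcount : p.support.countP Sum.isRight =
        p.support.tail.countP Sum.isRight + z.isRight.toNat := by
      rw [← p.cons_tail_support, List.countP_cons, List.tail_cons]
      cases z <;> rfl
    rw [SimpleGraph.Walk.support_cons, List.tail_cons, hcount, SimpleGraph.Walk.length_cons]
    lia

open Classical in
/-- The hyperedges among the vertices of a walk in `Bip 𝓗`. -/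
noncomputable def walkHyperedges (w : (bipGraph m E).Walk x y) : Finset (Fin m) :=
  {e | Sum.inr e ∈ w.support}

lemma mem_walkHyperedges {w : (bipGraph m E).Walk x y} {e : Fin m} :
    e ∈ walkHyperedges w ↔ .inr e ∈ w.support := by
  simp [walkHyperedges]

lemma length_eq_two_mul_card_walkHyperedges {w : (bipGraph m E).Walk x x} (hw : w.IsCycle) :
    w.length = 2 * (walkHyperedges w).card := by
  classical
  have hmap : (walkHyperedges w).map .inr = (w.support.tail.filter Sum.isRight).toFinset := by
    ext (v | e)
    · simp
    · have htail : Sum.inr e ∈ w.support ↔ .inr e ∈ w.support.tail := by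
        refine ⟨fun h => ?_, List.mem_of_mem_tail⟩
        rcases w.mem_support_iff.1 h with rfl | h
        · exact SimpleGraph.Walk.end_mem_tail_support hw.not_nil
        · exact h
      simp [mem_walkHyperedges, htail]
  have hcount := two_mul_countP_isRight_add w
  rw [← card_map, hmap, List.toFinset_card_of_nodup (hw.support_nodup.filter _),
    ← List.countP_eq_length_filter]
  lia

lemma mem_edgeSet_spanningRest_of_mem_edges {w : (bipGraph m E).Walk x y} {d : Sym2 (V ⊕ Fin m)}
    (hd : d ∈ w.edges) : d ∈ (spanningRest E (walkHyperedges w)).edgeSet := by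
  induction d with | _ a b
  have hadj : (bipGraph m E).Adj a b := w.adj_of_mem_edges hd
  refine spanningRest_adj.2 ⟨hadj, ?_⟩
  rcases a with v | e
  · rcases b with v' | e
    · exact (not_bipGraph_adj_inl_inl hadj).elim
    · exact ⟨e, mem_walkHyperedges.2 (w.snd_mem_support_of_mem_edges hd), .inr rfl⟩
  · exact ⟨e, mem_walkHyperedges.2 (w.fst_mem_support_of_mem_edges hd), .inl rfl⟩

lemma exists_isCycle_walkHyperedges_subset {F : Finset (Fin m)}
    (hF : ¬ (spanningRest E F).IsAcyclic) :
    ∃ (x : V ⊕ Fin m) (w : (bipGraph m E).Walk x x), w.IsCycle ∧ walkHyperedges w ⊆ F := by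
  simp only [SimpleGraph.IsAcyclic, not_forall, not_not] at hF
  obtain ⟨x, w, hw⟩ := hF
  refine ⟨x, w.mapLe (spanningRest_le_bipGraph F), hw.mapLe _, fun e he => ?_⟩
  have hmem : Sum.inr e ∈ w.support := by simpa [mem_walkHyperedges] using he
  obtain ⟨y, -, hadj⟩ := SimpleGraph.adj_of_mem_walk_support w hw.not_nil hmem
  exact (spanningRest_adj_inr.1 hadj).1

lemma forall_isAcyclic_spanningRest_iff {k : ℕ} :
    (∀ F : Finset (Fin m), F.card ≤ k → (spanningRest E F).IsAcyclic) ↔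
      ∀ (x : V ⊕ Fin m) (w : (bipGraph m E).Walk x x), w.IsCycle → 2 * k + 2 ≤ w.length := by
  refine ⟨fun h x w hw => ?_, fun h F hF => ?_⟩
  · have hcard : ¬ (walkHyperedges w).card ≤ k := fun hle =>
      h _ hle _ (hw.transfer fun _ hd => mem_edgeSet_spanningRest_of_mem_edges hd)
    have hlen := length_eq_two_mul_card_walkHyperedges hw
    lia
  · by_contra hcyc
    obtain ⟨x, w, hw, hsub⟩ := exists_isCycle_walkHyperedges_subset hcyc
    have hlen := length_eq_two_mul_card_walkHyperedges hw
    have hcard := card_le_card hsub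
    have := h x w hw
    lia

lemma isAcyclic_spanningRest_singleton (e : Fin m) : (spanningRest E {e}).IsAcyclic := by
  by_contra hcyc
  obtain ⟨x, w, hw, hsub⟩ := exists_isCycle_walkHyperedges_subset hcyc
  have hlen := length_eq_two_mul_card_walkHyperedges hw
  have hcard := card_le_card hsub
  have := hw.three_le_length
  rw [card_singleton] at hcard
  lia

end Cycles

section Polymatroid

variable {n : ℕ} {f : Finset (Fin n) → ℕ} {a a' c : Fin n → ℤ} {i j : Fin n}

/-- Independent vectors of the polymatroid with rank function `f`. Entries may be negative, so
that every vector below an independent vector is independent. -/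
def IndepVec (f : Finset (Fin n) → ℕ) (c : Fin n → ℤ) : Prop :=
  ∀ I, ∑ i ∈ I, c i ≤ f I

lemma mem_polyBases (hf : IsPolymatroidRank n f) :
    a ∈ polyBases n f ↔ IndepVec f a ∧ ∑ i, a i = f univ := by
  refine ⟨fun h => (mem_filter.1 h).2.2, fun ⟨hind, hsum⟩ => ?_⟩
  have hnonneg (i : Fin n) : 0 ≤ a i := by
    have herase := hind (univ.erase i)
    have hmono := hf.2.1 _ _ (erase_subset i univ)
    have hsplit := add_sum_erase univ a (mem_univ i)
    lia
  have hle (i : Fin n) : a i ≤ f univ :=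
    hsum ▸ single_le_sum (fun j _ => hnonneg j) (mem_univ i)
  refine mem_filter.2 ⟨mem_image.2 ⟨fun i => ⟨(a i).toNat, ?_⟩, mem_univ _, ?_⟩,
    hnonneg, hind, hsum⟩
  · have := hle i
    lia
  · funext i
    simp [hnonneg i]

lemma mem_intAct : i ∈ intAct n f a ↔
    ∀ j < i, a - Pi.single i 1 + Pi.single j 1 ∉ polyBases n f := by
  simp only [intAct, mem_filter, mem_univ, true_and]
  refine forall₂_congr fun j _ => ?_
  rw [show a - Pi.single i 1 + Pi.single j 1 = fun t =>
    a t - (if t = i then 1 else 0) + (if t = j then 1 else 0) by ext; simp [Pi.single_apply]]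

lemma IndepVec.tight_union_inter (hf : IsPolymatroidRank n f) (hc : IndepVec f c)
    {X Y : Finset (Fin n)} (hX : ∑ i ∈ X, c i = f X) (hY : ∑ i ∈ Y, c i = f Y) :
    ∑ i ∈ X ∪ Y, c i = f (X ∪ Y) ∧ ∑ i ∈ X ∩ Y, c i = f (X ∩ Y) := by
  have hsubmod := hf.2.2 X Y
  have hunion := hc (X ∪ Y)
  have hinter := hc (X ∩ Y)
  have hsum := sum_union_inter (s₁ := X) (s₂ := Y) (f := c)
  lia

lemma IndepVec.add_single_iff (hc : IndepVec f c) :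
    IndepVec f (c + Pi.single i 1) ↔ ∀ X, i ∈ X → ∑ t ∈ X, c t < f X := by
  simp only [IndepVec, Pi.add_apply, sum_add_distrib, sum_pi_single']
  refine forall_congr' fun X => ?_
  have := hc X
  by_cases hi : i ∈ X <;> simp [hi, Order.add_one_le_iff, this]

lemma IndepVec.exists_add_single (hf : IsPolymatroidRank n f) (hc : IndepVec f c)
    (hlt : ∑ i, c i < f univ) : ∃ i, IndepVec f (c + Pi.single i 1) := by
  by_contra! hmax
  have htight (i : Fin n) : ∃ X, i ∈ X ∧ ∑ t ∈ X, c t = f X := by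
    obtain ⟨X, hiX, hX⟩ : ∃ X, i ∈ X ∧ f X ≤ ∑ t ∈ X, c t := by
      simpa [hc.add_single_iff] using hmax i
    exact ⟨X, hiX, (hc X).antisymm hX⟩
  choose X hmem hX using htight
  have hsup : ∑ t ∈ univ.sup X, c t = f (univ.sup X) :=
    sup_induction (p := fun Y => ∑ t ∈ Y, c t = f Y) (by simp [hf.1])
      (fun _ hY _ hZ => (hc.tight_union_inter hf hY hZ).1) fun i _ => hX i
  have huniv : univ.sup X = univ :=
    eq_univ_of_forall fun i => le_sup (f := X) (mem_univ i) (hmem i)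
  rw [huniv] at hsup
  exact hlt.ne hsup

lemma IndepVec.exists_le_mem_polyBases (hf : IsPolymatroidRank n f) (hc : IndepVec f c) :
    ∃ a ∈ polyBases n f, c ≤ a := by
  induction hs : (f univ - ∑ i, c i).toNat generalizing c with
  | zero =>
    have hle := hc univ
    exact ⟨c, (mem_polyBases hf).2 ⟨hc, by lia⟩, le_rfl⟩
  | succ s ih =>
    obtain ⟨i, hi⟩ := hc.exists_add_single hf (by lia)
    obtain ⟨a, ha, hle⟩ := ih hi (by
      simp only [Pi.add_apply, sum_add_distrib, sum_pi_single', mem_univ, if_true]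
      lia)
    exact ⟨a, ha, le_trans (le_add_of_nonneg_right (Pi.single_nonneg.2 zero_le_one)) hle⟩

lemma exists_exchange (hf : IsPolymatroidRank n f) (ha : a ∈ polyBases n f)
    (ha' : a' ∈ polyBases n f) (hj : a j < a' j) :
    ∃ i, a' i < a i ∧ a - Pi.single i 1 + Pi.single j 1 ∈ polyBases n f := by
  simp only [mem_polyBases hf] at ha ha' ⊢
  let D : Finset (Fin n) := ({X | j ∈ X ∧ ∑ t ∈ X, a t = f X} : Finset (Finset (Fin n))).inf id
  have hD : ∑ t ∈ D, a t = f D :=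
    inf_induction (p := fun Y => ∑ t ∈ Y, a t = f Y) ha.2
      (fun _ hY _ hZ => (ha.1.tight_union_inter hf hY hZ).2) fun X hX => (mem_filter.1 hX).2.2
  have hjD : j ∈ D := mem_inf.2 fun X hX => (mem_filter.1 hX).2.1
  obtain ⟨i, hiD, hi⟩ : ∃ i ∈ D, a' i < a i := by
    by_contra! hle
    have hlt := sum_lt_sum hle ⟨j, hjD, hj⟩
    have := ha'.1 D
    lia
  refine ⟨i, hi, fun X => ?_, ?_⟩
  · have hX := ha.1 X
    have htight (hjX : j ∈ X) (hX : ∑ t ∈ X, a t = f X) : i ∈ X :=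
      inf_le (f := id) (mem_filter.2 ⟨mem_univ X, hjX, hX⟩) hiD
    simp only [Pi.add_apply, Pi.sub_apply, sum_add_distrib, sum_sub_distrib, sum_pi_single']
    split_ifs with hiX hjX hjX <;> grind
  · simp [sum_add_distrib, ha.2]

/-- `a` is a basis obtained from `c` by raising internally active coordinates only. -/
def IsActiveCompletion (f : Finset (Fin n) → ℕ) (c a : Fin n → ℤ) : Prop :=
  a ∈ polyBases n f ∧ c ≤ a ∧ ∀ i ∉ intAct n f a, c i = a i

-- Among the bases above `c`, the one minimising `∑ i, i * a i` cannot shift weight to the left.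
lemma IndepVec.exists_isActiveCompletion (hf : IsPolymatroidRank n f) (hc : IndepVec f c) :
    ∃ a, IsActiveCompletion f c a := by
  classical
  have hne : {a ∈ polyBases n f | c ≤ a}.Nonempty := by
    simpa [Finset.Nonempty] using hc.exists_le_mem_polyBases hf
  obtain ⟨a, ha, hmin⟩ := exists_min_image _
    (fun a : Fin n → ℤ => ∑ i : Fin n, ((i : ℕ) : ℤ) * a i) hne
  rw [mem_filter] at ha
  refine ⟨a, ha.1, ha.2, fun i hi => ?_⟩
  by_contra hci
  obtain ⟨j, hji, hj⟩ : ∃ j < i, a - Pi.single i 1 + Pi.single j 1 ∈ polyBases n f := by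
    simpa [mem_intAct] using hi
  have hle : c ≤ a - Pi.single i 1 + Pi.single j 1 := fun t => by
    have hlt : c i < a i := (ha.2 i).lt_of_ne hci
    have := ha.2 t
    simp only [Pi.add_apply, Pi.sub_apply, Pi.single_apply]
    grind
  have hweight := hmin _ (mem_filter.2 ⟨hj, hle⟩)
  simp only [Pi.add_apply, Pi.sub_apply, Pi.single_apply, mul_add, mul_sub, mul_ite, mul_one,
    mul_zero, sum_add_distrib, sum_sub_distrib, sum_ite_eq', mem_univ, if_true] at hweight
  have hji' : ((j : ℕ) : ℤ) < (i : ℕ) := mod_cast hji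
  linarith

lemma IsActiveCompletion.le_of_forall_lt_eq (hf : IsPolymatroidRank n f)
    (h : IsActiveCompletion f c a) (ha' : a' ∈ polyBases n f) (hca' : c ≤ a')
    (heq : ∀ i < j, a i = a' i) : a' j ≤ a j := by
  by_contra! hj
  obtain ⟨i, hi, hmem⟩ := exists_exchange hf h.1 ha' hj
  have hji : j < i := by
    by_contra! hij
    rcases hij.lt_or_eq with hlt | rfl
    · exact hi.ne' (heq i hlt)
    · exact hi.asymm hj
  have hna : i ∉ intAct n f a := fun hact => mem_intAct.1 hact j hji hmem
  exact (hca' i).not_gt (h.2.2 i hna ▸ hi)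

lemma IsActiveCompletion.unique (hf : IsPolymatroidRank n f) (h : IsActiveCompletion f c a)
    (h' : IsActiveCompletion f c a') : a = a' := by
  funext j
  induction j using WellFoundedLT.induction with
  | ind j heq =>
    exact (h'.le_of_forall_lt_eq hf h.1 h.2.1 fun i hi => (heq i hi).symm).antisymm
      (h.le_of_forall_lt_eq hf h'.1 h'.2.1 heq)

end Polymatroid

section LatticePoints

lemma choose_add_add_eq_sum (g n s : ℕ) :
    (g + s + n).choose n =
      ∑ j ∈ range (n + 1), g.multichoose j * (s + (n - j)).choose (n - j) := by
  induction g generalizing n with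
  | zero => simp [sum_range_succ']
  | succ g ihg =>
    induction n with
    | zero => simp
    | succ n ihn =>
      rw [show g + 1 + s + (n + 1) = (g + 1 + s + n) + 1 by ring, Nat.choose_succ_succ, ihn,
        show g + 1 + s + n = g + s + (n + 1) by ring, ihg,
        sum_range_succ' _ (n + 1), sum_range_succ' _ (n + 1)]
      simp only [Nat.multichoose_succ_succ g, add_mul, sum_add_distrib,
        Nat.multichoose_zero_right, Nat.add_sub_add_right]
      ring

variable {ι : Type*} [DecidableEq ι]

lemma card_piAntidiag (A : Finset ι) (s : ℕ) : (piAntidiag A s).card = A.card.multichoose s := by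
  rw [← card_finsuppAntidiag_nat_eq_multichoose, finsuppAntidiag, card_map, card_attach]

variable [Fintype ι]

/-- Lattice points of the `s`-th dilate of the corner simplex spanned by `0` and the unit vectors
indexed by `A`. -/
def dilatedSimplex (A : Finset ι) (s : ℕ) : Finset (ι → ℕ) :=
  (range (s + 1)).biUnion (piAntidiag A)

lemma mem_dilatedSimplex {A : Finset ι} {s : ℕ} {d : ι → ℕ} :
    d ∈ dilatedSimplex A s ↔ (∀ i ∉ A, d i = 0) ∧ ∑ i, d i ≤ s := by
  have hsupp : (∀ i ∉ A, d i = 0) ↔ ∀ i, d i ≠ 0 → i ∈ A := by grind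
  have hsum (h : ∀ i ∉ A, d i = 0) : A.sum d = ∑ i, d i :=
    sum_subset (subset_univ A) fun i _ => h i
  simp only [dilatedSimplex, mem_biUnion, mem_range_succ_iff, mem_piAntidiag, ← hsupp]
  exact ⟨fun ⟨r, hr, hs, h⟩ => ⟨h, by rwa [← hsum h, hs]⟩,
    fun ⟨h, hs⟩ => ⟨A.sum d, (hsum h).trans_le hs, rfl, h⟩⟩

lemma card_dilatedSimplex (A : Finset ι) (s : ℕ) :
    (dilatedSimplex A s).card = (s + A.card).choose A.card := by
  rw [dilatedSimplex, card_biUnion, ← Nat.sum_range_multichoose]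
  · simp_rw [card_piAntidiag]
  · refine fun r _ r' _ hne => disjoint_left.2 fun d hd hd' => hne ?_
    rw [← (mem_piAntidiag.1 hd).1, (mem_piAntidiag.1 hd').1]

end LatticePoints

section Covering

variable {ι : Type*} [DecidableEq ι] [Fintype ι] {r : Finset ι → ℕ} {s : ℕ} {d : ι → ℕ}

/-- The vectors of the `s`-th dilated simplex that meet all demands `r F`, in the sense that their
coordinates in `F` add up to at least `r F`. -/
def coveringPoints (r : Finset ι → ℕ) (s : ℕ) : Finset (ι → ℕ) :=
  {d ∈ dilatedSimplex univ s | ∀ F, r F ≤ ∑ i ∈ F, d i}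

lemma mem_coveringPoints :
    d ∈ coveringPoints r s ↔ ∑ i, d i ≤ s ∧ ∀ F, r F ≤ ∑ i ∈ F, d i := by
  simp [coveringPoints, mem_dilatedSimplex]

lemma mem_sdiff_coveringPoints :
    d ∈ dilatedSimplex univ s \ coveringPoints r s ↔
      ∑ i, d i ≤ s ∧ ∃ F, ∑ i ∈ F, d i < r F := by
  simp only [mem_sdiff, mem_coveringPoints, mem_dilatedSimplex]
  grind

variable {n : ℕ} {f : Finset (Fin n) → ℕ} {a : Fin n → ℤ}

/-- The nullity of `F`: the amount by which its rank falls short of the sum of the ranks of its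
elements. The subtraction is exact when `f` is a polymatroid rank function. -/
def nullity (f : Finset (Fin n) → ℕ) (F : Finset (Fin n)) : ℕ :=
  ∑ i ∈ F, f {i} - f F

lemma rank_add_nullity (hf : IsPolymatroidRank n f) (F : Finset (Fin n)) :
    f F + nullity f F = ∑ i ∈ F, f {i} := by
  refine Nat.add_sub_cancel' ?_
  induction F using Finset.induction_on with
  | empty => simp [hf.1]
  | insert i F hi ih =>
    have hsubmod := hf.2.2 {i} F
    rw [sum_insert hi, insert_eq]
    lia

/-- The integer vector lying `d` below the vector of ranks of the singletons. -/
def singletonRankSub (f : Finset (Fin n) → ℕ) (d : Fin n → ℕ) (i : Fin n) : ℤ :=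
  f {i} - d i

lemma mem_coveringPoints_nullity {s : ℕ} {d : Fin n → ℕ} :
    d ∈ coveringPoints (nullity f) s ↔ ∑ i, d i ≤ s ∧ IndepVec f (singletonRankSub f d) := by
  rw [mem_coveringPoints]
  refine and_congr_right' <| forall_congr' fun F => ?_
  simp only [nullity, singletonRankSub, sum_sub_distrib, tsub_le_iff_right]
  zify
  lia

/-- The vectors `d` with coordinate sum at most `nullity f univ + s` for which `a` is the active
completion of `singletonRankSub f d`. -/
def activeFiber (f : Finset (Fin n) → ℕ) (s : ℕ) (a : Fin n → ℤ) : Finset (Fin n → ℕ) :=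
  (dilatedSimplex (intAct n f a) s).image ((fun i => (f {i} - a i).toNat) + ·)

lemma card_activeFiber (s : ℕ) :
    (activeFiber f s a).card = (s + (intAct n f a).card).choose (intAct n f a).card := by
  rw [activeFiber, card_image_of_injective _ (add_right_injective _), card_dilatedSimplex]

lemma mem_activeFiber (hf : IsPolymatroidRank n f) (ha : a ∈ polyBases n f) {s : ℕ}
    {d : Fin n → ℕ} :
    d ∈ activeFiber f s a ↔
      IsActiveCompletion f (singletonRankSub f d) a ∧ ∑ i, d i ≤ nullity f univ + s := by
  obtain ⟨hind, hsum⟩ := (mem_polyBases hf).1 ha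
  have hle (i : Fin n) : a i ≤ f {i} := by simpa using hind {i}
  have hdeg : ∑ i, (f {i} - a i).toNat = nullity f univ := by
    have hrank := rank_add_nullity hf univ
    zify at hrank ⊢
    simp only [Int.toNat_of_nonneg (sub_nonneg.2 (hle _)), sum_sub_distrib]
    lia
  simp only [activeFiber, mem_image, mem_dilatedSimplex, IsActiveCompletion, Pi.le_def,
    singletonRankSub]
  constructor
  · rintro ⟨t, ⟨hsupp, ht⟩, rfl⟩
    refine ⟨⟨ha, fun i => ?_, fun i hi => ?_⟩, by simpa [sum_add_distrib, hdeg] using ht⟩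
    · have := hle i
      simp only [Pi.add_apply]
      lia
    · have := hle i
      simp only [Pi.add_apply, hsupp i hi]
      lia
  · rintro ⟨⟨-, hca, hact⟩, hd⟩
    have hsplit (i : Fin n) : (f {i} - a i).toNat + (d i - (f {i} - a i).toNat) = d i := by
      have := hca i
      lia
    refine ⟨fun i => d i - (f {i} - a i).toNat, ⟨fun i hi => ?_, ?_⟩, funext hsplit⟩
    · have := hact i hi
      lia
    · rw [← sum_congr rfl fun i _ => hsplit i, sum_add_distrib, hdeg] at hd
      lia

lemma card_coveringPoints_nullity (hf : IsPolymatroidRank n f) (s : ℕ) :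
    (coveringPoints (nullity f) (nullity f univ + s)).card =
      ∑ a ∈ polyBases n f, (s + (intAct n f a).card).choose (intAct n f a).card := by
  have hunion : coveringPoints (nullity f) (nullity f univ + s) =
      (polyBases n f).biUnion (activeFiber f s) := by
    ext d
    rw [mem_coveringPoints_nullity, mem_biUnion]
    constructor
    · rintro ⟨hd, hind⟩
      obtain ⟨a, ha⟩ := hind.exists_isActiveCompletion hf
      exact ⟨a, ha.1, (mem_activeFiber hf ha.1).2 ⟨ha, hd⟩⟩
    · rintro ⟨a, ha, hd⟩
      obtain ⟨hcompl, hd⟩ := (mem_activeFiber hf ha).1 hd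
      exact ⟨hd, fun F => (sum_le_sum fun i _ => hcompl.2.1 i).trans
        (((mem_polyBases hf).1 ha).1 F)⟩
  rw [hunion, card_biUnion]
  · simp_rw [card_activeFiber]
  · refine fun a ha a' ha' hne => disjoint_left.2 fun d hd hd' => hne ?_
    exact ((mem_activeFiber hf ha).1 hd).1.unique hf ((mem_activeFiber hf ha').1 hd').1

lemma coeff_interiorPoly (j : ℕ) :
    (interiorPoly n f).coeff j = {a ∈ polyBases n f | n - (intAct n f a).card = j}.card := by
  simp [interiorPoly, finsetSum_coeff, coeff_X_pow, eq_comm]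

lemma coeff_interiorPoly_eq_zero {j : ℕ} (hj : n < j) : (interiorPoly n f).coeff j = 0 := by
  rw [coeff_interiorPoly, filter_false_of_mem fun a _ => by lia, card_empty, Nat.cast_zero]

lemma sum_choose_card_intAct (s : ℕ) :
    (∑ a ∈ polyBases n f, (s + (intAct n f a).card).choose (intAct n f a).card : ℤ) =
      ∑ j ∈ range (n + 1), (interiorPoly n f).coeff j * (s + (n - j)).choose (n - j) := by
  rw [← sum_fiberwise_of_maps_to (g := fun a => n - (intAct n f a).card)
    fun a _ => mem_range_succ_iff.2 (Nat.sub_le _ _)]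
  refine sum_congr rfl fun j _ => ?_
  rw [coeff_interiorPoly, ← nsmul_eq_mul]
  refine sum_eq_card_nsmul fun a ha => ?_
  have hcard : (intAct n f a).card ≤ n := (card_le_univ _).trans_eq (Fintype.card_fin n)
  rw [← (mem_filter.1 ha).2, Nat.sub_sub_self hcard]

lemma card_sdiff_coveringPoints_nullity (hf : IsPolymatroidRank n f) (s : ℕ) :
    ((dilatedSimplex univ (nullity f univ + s) \
        coveringPoints (nullity f) (nullity f univ + s)).card : ℤ) =
      ∑ j ∈ range (n + 1), ((nullity f univ).multichoose j - (interiorPoly n f).coeff j) *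
        (s + (n - j)).choose (n - j) := by
  rw [coveringPoints, cast_card_sdiff (filter_subset _ _), ← coveringPoints,
    card_coveringPoints_nullity hf, card_dilatedSimplex, card_univ, Fintype.card_fin,
    choose_add_add_eq_sum]
  push_cast
  rw [sum_choose_card_intAct, ← sum_sub_distrib]
  simp only [sub_mul]

end Covering

section Growth

open Asymptotics Filter

lemma isTheta_natCast_add_pow (a q : ℕ) :
    (fun s : ℕ => ((s + a : ℕ) : ℝ) ^ q) =Θ[atTop] fun s : ℕ => (s : ℝ) ^ q := by
  refine IsTheta.pow ?_ q
  have hconst : (fun _ : ℕ => (a : ℝ)) =o[atTop] fun s : ℕ => (s : ℝ) :=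
    isLittleO_const_left.2 (.inr (tendsto_norm_atTop_atTop.comp tendsto_natCast_atTop_atTop))
  simp only [Nat.cast_add]
  exact (IsEquivalent.refl.add_isLittleO hconst).isTheta

lemma isTheta_choose_add (q : ℕ) :
    (fun s : ℕ => ((s + q).choose q : ℝ)) =Θ[atTop] fun s : ℕ => (s : ℝ) ^ q :=
  have hshift := tendsto_add_atTop_nat q
  have hchoose := isTheta_choose q
  IsTheta.trans ⟨hchoose.1.comp_tendsto hshift, hchoose.2.comp_tendsto hshift⟩
    (isTheta_natCast_add_pow q q)

lemma isLittleO_natCast_pow {p q : ℕ} (h : p < q) :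
    (fun s : ℕ => (s : ℝ) ^ p) =o[atTop] fun s : ℕ => (s : ℝ) ^ q :=
  (isLittleO_pow_pow_atTop_of_lt h).comp_tendsto tendsto_natCast_atTop_atTop

lemma isBigO_natCast_pow {p q : ℕ} (h : p ≤ q) :
    (fun s : ℕ => (s : ℝ) ^ p) =O[atTop] fun s : ℕ => (s : ℝ) ^ q :=
  h.eq_or_lt.elim (fun h => h ▸ isBigO_refl _ _) fun h => (isLittleO_natCast_pow h).isBigO

lemma not_isLittleO_natCast_pow_self (q : ℕ) :
    ¬(fun s : ℕ => (s : ℝ) ^ q) =o[atTop] fun s : ℕ => (s : ℝ) ^ q :=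
  isLittleO_irrefl ((eventually_gt_atTop 0).mono fun _ hs => by positivity).frequently

variable {n k : ℕ} {δ : ℕ → ℝ}

lemma isLittleO_sum_mul_choose (hδ : ∀ j ≤ k, δ j = 0) :
    (fun s : ℕ => ∑ j ∈ range (n + 1), δ j * (s + (n - j)).choose (n - j))
      =o[atTop] fun s : ℕ => (s : ℝ) ^ (n - k) := by
  refine IsLittleO.fun_sum fun j hj => ?_
  rcases le_or_gt j k with hjk | hkj
  · simp only [hδ j hjk, zero_mul]
    exact isLittleO_zero _ _
  · have hlt : n - j < n - k := by
      have := mem_range.1 hj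
      lia
    exact ((isTheta_choose_add _).trans_isLittleO (isLittleO_natCast_pow hlt)).const_mul_left _

lemma isLittleO_sum_mul_choose_iff (hk : k ≤ n) :
    (fun s : ℕ => ∑ j ∈ range (n + 1), δ j * (s + (n - j)).choose (n - j))
      =o[atTop] (fun s : ℕ => (s : ℝ) ^ (n - k)) ↔ ∀ j ≤ k, δ j = 0 := by
  refine ⟨fun h j hj => ?_, isLittleO_sum_mul_choose⟩
  induction j using Nat.strong_induction_on with
  | _ j ih =>
    have hsum := h.trans_isBigO (isBigO_natCast_pow (Nat.sub_le_sub_left hj n))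
    have hrest : (fun s : ℕ => ∑ i ∈ range (n + 1), Function.update δ j 0 i *
        (s + (n - i)).choose (n - i)) =o[atTop] fun s : ℕ => (s : ℝ) ^ (n - j) := by
      refine isLittleO_sum_mul_choose fun i hi => ?_
      rcases hi.eq_or_lt with rfl | hlt
      · exact Function.update_self ..
      · rw [Function.update_of_ne hlt.ne, ih i hlt (by lia)]
    have hterm : (fun s : ℕ => δ j * (s + (n - j)).choose (n - j))
        =o[atTop] fun s : ℕ => (s : ℝ) ^ (n - j) := by
      refine (hsum.sub hrest).congr_left fun s => ?_
      rw [← sum_sub_distrib, sum_eq_single j]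
      · simp
      · intro i _ hi
        simp [hi]
      · intro hj'
        exact (hj' (mem_range_succ_iff.2 (hj.trans hk))).elim
    by_contra hδ
    exact not_isLittleO_natCast_pow_self (n - j) <|
      (isTheta_choose_add (n - j)).symm.trans_isLittleO ((isLittleO_const_mul_left_iff hδ).1 hterm)

variable {ι : Type*} [DecidableEq ι] [Fintype ι] {r : Finset ι → ℕ}

lemma choose_le_card_sdiff_coveringPoints {F : Finset ι} (hF : r F ≠ 0) (s : ℕ) :
    (s + Fᶜ.card).choose Fᶜ.card ≤ (dilatedSimplex univ s \ coveringPoints r s).card := by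
  rw [← card_dilatedSimplex]
  refine card_le_card fun d hd => ?_
  obtain ⟨hsupp, hsum⟩ := mem_dilatedSimplex.1 hd
  refine mem_sdiff_coveringPoints.2 ⟨hsum, F, ?_⟩
  rw [sum_eq_zero fun i hi => hsupp i (by simpa using hi)]
  exact Nat.pos_of_ne_zero hF

lemma card_sdiff_coveringPoints_le (s : ℕ) :
    (dilatedSimplex univ s \ coveringPoints r s).card ≤
      ∑ F with r F ≠ 0, r F ^ F.card * (s + 1) ^ Fᶜ.card := by
  let box (F : Finset ι) : Finset (ι → ℕ) :=
    Fintype.piFinset fun i => if i ∈ F then range (r F) else range (s + 1)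
  have hbox (F : Finset ι) : (box F).card = r F ^ F.card * (s + 1) ^ Fᶜ.card := by
    simp [box, Fintype.card_piFinset, apply_ite card, prod_ite, filter_notMem_eq_sdiff,
      ← compl_eq_univ_sdiff]
  simp_rw [← hbox]
  refine (card_le_card fun d hd => ?_).trans card_biUnion_le
  obtain ⟨hsum, F, hF⟩ := mem_sdiff_coveringPoints.1 hd
  refine mem_biUnion.2 ⟨F, by simpa using (Nat.zero_le _).trans_lt hF |>.ne',
    Fintype.mem_piFinset.2 fun i => ?_⟩
  split_ifs with hi
  · exact mem_range.2 ((single_le_sum_of_canonicallyOrdered hi).trans_lt hF)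
  · exact mem_range_succ_iff.2 ((single_le_sum_of_canonicallyOrdered (mem_univ i)).trans hsum)

lemma isLittleO_card_sdiff_coveringPoints_iff (g : ℕ) :
    (fun s : ℕ => ((dilatedSimplex univ (g + s) \ coveringPoints r (g + s)).card : ℝ))
      =o[atTop] (fun s : ℕ => (s : ℝ) ^ (Fintype.card ι - k)) ↔
    ∀ F : Finset ι, F.card ≤ k → r F = 0 := by
  refine ⟨fun h F hFk => ?_, fun h => ?_⟩
  · by_contra hF
    have hlower : (fun s : ℕ => (s : ℝ) ^ Fᶜ.card) =O[atTop] fun s : ℕ =>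
        ((dilatedSimplex univ (g + s) \ coveringPoints r (g + s)).card : ℝ) := by
      refine (isTheta_choose_add _).2.trans (.of_norm_le fun s => ?_)
      simp only [Real.norm_natCast, Nat.cast_le]
      exact (Nat.choose_le_choose _ (by lia)).trans (choose_le_card_sdiff_coveringPoints hF (g + s))
    have hcard : Fintype.card ι - k ≤ Fᶜ.card := by
      rw [card_compl]
      exact Nat.sub_le_sub_left hFk _
    exact not_isLittleO_natCast_pow_self _
      ((hlower.trans_isLittleO h).trans_isBigO (isBigO_natCast_pow hcard))
  · have hupper : (fun s : ℕ =>
        ((dilatedSimplex univ (g + s) \ coveringPoints r (g + s)).card : ℝ)) =O[atTop] fun s : ℕ =>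
          ∑ F with r F ≠ 0, (r F : ℝ) ^ F.card * ((s + (g + 1) : ℕ) : ℝ) ^ Fᶜ.card := by
      refine .of_norm_le fun s => ?_
      rw [Real.norm_natCast, ← add_assoc, add_comm s g]
      exact_mod_cast card_sdiff_coveringPoints_le (g + s)
    refine hupper.trans_isLittleO (IsLittleO.fun_sum fun F hF => ?_)
    have hkF : k < F.card := not_le.1 fun hle => (mem_filter.1 hF).2 (h F hle)
    have hcard : Fᶜ.card < Fintype.card ι - k := by
      have := card_compl_add_card F
      lia
    exact ((isTheta_natCast_add_pow _ _).trans_isLittleO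
      (isLittleO_natCast_pow hcard)).const_mul_left _

end Growth

section Coefficients

variable {n : ℕ} {f : Finset (Fin n) → ℕ}

lemma coeff_interiorPoly_eq_multichoose_iff_of_le (hf : IsPolymatroidRank n f) {k : ℕ}
    (hk : k ≤ n) :
    (∀ i ≤ k, (interiorPoly n f).coeff i = (nullity f univ).multichoose i) ↔
      ∀ F : Finset (Fin n), F.card ≤ k → nullity f F = 0 := by
  have hcount (s : ℕ) : ((dilatedSimplex univ (nullity f univ + s) \
        coveringPoints (nullity f) (nullity f univ + s)).card : ℝ) =
      ∑ j ∈ range (n + 1), ((nullity f univ).multichoose j - (interiorPoly n f).coeff j : ℝ) *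
        (s + (n - j)).choose (n - j) := by
    exact_mod_cast congrArg (Int.cast : ℤ → ℝ) (card_sdiff_coveringPoints_nullity hf s)
  rw [← isLittleO_card_sdiff_coveringPoints_iff (nullity f univ), Fintype.card_fin,
    funext hcount, isLittleO_sum_mul_choose_iff hk]
  refine forall₂_congr fun j _ => ?_
  rw [sub_eq_zero, eq_comm]
  norm_cast

theorem coeff_interiorPoly_eq_multichoose_iff (hf : IsPolymatroidRank n f) (k : ℕ) :
    (∀ i ≤ k, (interiorPoly n f).coeff i = (nullity f univ).multichoose i) ↔
      ∀ F : Finset (Fin n), F.card ≤ k → nullity f F = 0 := by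
  rcases le_total k n with hk | hk
  · exact coeff_interiorPoly_eq_multichoose_iff_of_le hf hk
  have hiff := coeff_interiorPoly_eq_multichoose_iff_of_le hf le_rfl
  have hcard (F : Finset (Fin n)) : F.card ≤ n := card_finset_fin_le F
  refine ⟨fun h F _ => hiff.1 (fun i hi => h i (hi.trans hk)) F (hcard F), fun h i _ => ?_⟩
  rcases le_or_gt i n with hi | hi
  · exact hiff.2 (fun F hF => h F (hF.trans hk)) i hi
  · obtain ⟨i, rfl⟩ := Nat.exists_eq_add_one_of_ne_zero (Nat.ne_zero_of_lt hi)
    rw [coeff_interiorPoly_eq_zero hi, h univ ((hcard univ).trans hk), Nat.multichoose_zero_succ,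
      Nat.cast_zero]

end Coefficients

section HypergraphNullity

variable {V : Type*} [DecidableEq V] [Finite V] {m : ℕ} {E : Fin m → Finset V}

lemma muRank_singleton_add_one (hne : ∀ e, (E e).Nonempty) (e : Fin m) :
    muRank m E {e} + 1 = (E e).card := by
  simpa using ((isAcyclic_spanningRest_iff hne).1 (isAcyclic_spanningRest_singleton e)).symm

lemma muRank_add_nullity_add_card (hne : ∀ e, (E e).Nonempty) (F : Finset (Fin m)) :
    muRank m E F + nullity (muRank m E) F + F.card = ∑ e ∈ F, (E e).card := by
  rw [rank_add_nullity (isPolymatroidRank_muRank hne), card_eq_sum_ones, ← sum_add_distrib]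
  exact sum_congr rfl fun e _ => muRank_singleton_add_one hne e

lemma nullity_muRank_eq_zero_iff (hne : ∀ e, (E e).Nonempty) {F : Finset (Fin m)} :
    nullity (muRank m E) F = 0 ↔ (spanningRest E F).IsAcyclic := by
  have := muRank_add_nullity_add_card hne F
  rw [isAcyclic_spanningRest_iff hne]
  lia

lemma nullity_muRank_univ (hne : ∀ e, (E e).Nonempty) :
    nullity (muRank m E) univ + m + Nat.card V =
      ∑ e, (E e).card + Nat.card (bipGraph m E).ConnectedComponent := by
  have hnullity := muRank_add_nullity_add_card hne univ
  have hrank := muRank_add_card_connectedComponent hne univ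
  rw [spanningRest_univ] at hrank
  rw [card_univ, Fintype.card_fin] at hnullity hrank
  lia

end HypergraphNullity

theorem stmt15_general {V : Type*} [Fintype V] [DecidableEq V] (m : ℕ) (E : Fin m → Finset V)
    (hne : ∀ e : Fin m, (E e).Nonempty) (g : ℕ)
    (hg : g + m + Fintype.card V =
      ∑ e : Fin m, (E e).card + Nat.card (bipGraph m E).ConnectedComponent) (k : ℕ) :
    (∀ i ≤ k, (interiorPoly m (muRank m E)).coeff i = ((g + i - 1).choose i : ℤ)) ↔
      ∀ (u : V ⊕ Fin m) (w : (bipGraph m E).Walk u u), w.IsCycle →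
        2 * k + 2 ≤ w.length := by
  have hgenus : nullity (muRank m E) univ = g := by
    have := nullity_muRank_univ hne
    rw [Nat.card_eq_fintype_card] at this
    lia
  have hcoeff := coeff_interiorPoly_eq_multichoose_iff (isPolymatroidRank_muRank hne) k
  simp only [hgenus, nullity_muRank_eq_zero_iff hne, Nat.multichoose_eq] at hcoeff
  exact hcoeff.trans forall_isAcyclic_spanningRest_iff

/-- For a connected hypergraph `𝓗 = (V, E)` with
`g = ∑_{e ∈ E} deg_{Bip 𝓗}(e) - |E| - |V| + 1` and every `k ≤ |E|`:
`[x^i]I_𝓗(x) = C(g+i-1, i)` for all `i ≤ k` iff every cycle of `Bip 𝓗` has length at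
least `2k+2` (i.e. the girth of `Bip 𝓗` is at least `2k+2`). -/
theorem stmt15 {V : Type*} [Fintype V] [DecidableEq V] (m : ℕ) (E : Fin m → Finset V)
    (hne : ∀ e : Fin m, (E e).Nonempty) (hconn : (bipGraph m E).Connected)
    (g : ℕ) (hg : g + m + Fintype.card V = (∑ e : Fin m, (E e).card) + 1)
    (k : ℕ) (hk : k ≤ m) :
    (∀ i ≤ k, (interiorPoly m (muRank m E)).coeff i = ((g + i - 1).choose i : ℤ)) ↔
      ∀ (u : V ⊕ Fin m) (w : (bipGraph m E).Walk u u), w.IsCycle →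
        2 * k + 2 ≤ w.length :=
  stmt15_general m E hne g (hg.trans (by rw [card_connectedComponent_eq_one hconn])) k
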